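/- (Gowdy-to-Ernst transformation.) Suppose A' : [R₀,∞) × ℝ → ℝ is a smooth function with ∂_R A' = e^{4U} R⁻¹ ∂_θ A and ∂_θ A' = e^{4U} R⁻¹ ∂_R A on [R₀,∞) × ℝ, and set U'(R,θ) = (1/2) ln R − U(R,θ). Then the pair (U', A') satisfies the same Gowdy wave equations: ∂_R(R ∂_R U') − ∂_θ(R ∂_θ U') = (e^{4U'}/(2R))((∂_R A')² − (∂_θ A')²) and ∂_R(R⁻¹ ∂_R A') − ∂_θ(R⁻¹ ∂_θ A') = (4/R)(−∂_R U' ∂_R A' + ∂_θ U' ∂_θ A'). -/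

import Mathlib

open Real MeasureTheory Set

/-- Partial derivative with respect to the first (time) variable `R`. -/
noncomputable def pdR (f : ℝ → ℝ → ℝ) (R θ : ℝ) : ℝ := deriv (fun r => f r θ) R

/-- Partial derivative with respect to the second (space) variable `θ`. -/
noncomputable def pdT (f : ℝ → ℝ → ℝ) (R θ : ℝ) : ℝ := deriv (fun t => f R t) θ

lemma hdR {f : ℝ → ℝ → ℝ} (hf : ContDiff ℝ (⊤ : ℕ∞) (Function.uncurry f)) (R θ : ℝ) :
    HasDerivAt (fun r => f r θ) (fderiv ℝ (Function.uncurry f) (R, θ) (1, 0)) R := by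
  have h1 : HasFDerivAt (Function.uncurry f) (fderiv ℝ (Function.uncurry f) (R, θ)) (R, θ) :=
    (hf.differentiable (by simp) _).hasFDerivAt
  have h2 : HasDerivAt (fun r : ℝ => (r, θ)) ((1 : ℝ), (0 : ℝ)) R :=
    (hasDerivAt_id R).prodMk (hasDerivAt_const R θ)
  exact h1.comp_hasDerivAt R h2

lemma hdT {f : ℝ → ℝ → ℝ} (hf : ContDiff ℝ (⊤ : ℕ∞) (Function.uncurry f)) (R θ : ℝ) :
    HasDerivAt (fun t => f R t) (fderiv ℝ (Function.uncurry f) (R, θ) (0, 1)) θ := by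
  have h1 : HasFDerivAt (Function.uncurry f) (fderiv ℝ (Function.uncurry f) (R, θ)) (R, θ) :=
    (hf.differentiable (by simp) _).hasFDerivAt
  have h2 : HasDerivAt (fun t : ℝ => (R, t)) ((0 : ℝ), (1 : ℝ)) θ :=
    (hasDerivAt_const θ R).prodMk (hasDerivAt_id θ)
  exact h1.comp_hasDerivAt θ h2

lemma pdR_eq {f : ℝ → ℝ → ℝ} (hf : ContDiff ℝ (⊤ : ℕ∞) (Function.uncurry f)) :
    Function.uncurry (pdR f) = fun p => fderiv ℝ (Function.uncurry f) p (1, 0) := by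
  funext ⟨R, θ⟩
  exact (hdR hf R θ).deriv

lemma pdT_eq {f : ℝ → ℝ → ℝ} (hf : ContDiff ℝ (⊤ : ℕ∞) (Function.uncurry f)) :
    Function.uncurry (pdT f) = fun p => fderiv ℝ (Function.uncurry f) p (0, 1) := by
  funext ⟨R, θ⟩
  exact (hdT hf R θ).deriv

lemma fd_smooth {f : ℝ × ℝ → ℝ} (hf : ContDiff ℝ (⊤ : ℕ∞) f) :
    ContDiff ℝ (⊤ : ℕ∞) (fderiv ℝ f) :=
  hf.fderiv_right (by simp)

lemma pdR_smooth {f : ℝ → ℝ → ℝ} (hf : ContDiff ℝ (⊤ : ℕ∞) (Function.uncurry f)) :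
    ContDiff ℝ (⊤ : ℕ∞) (Function.uncurry (pdR f)) := by
  rw [pdR_eq hf]
  exact (fd_smooth hf).clm_apply contDiff_const

lemma pdT_smooth {f : ℝ → ℝ → ℝ} (hf : ContDiff ℝ (⊤ : ℕ∞) (Function.uncurry f)) :
    ContDiff ℝ (⊤ : ℕ∞) (Function.uncurry (pdT f)) := by
  rw [pdT_eq hf]
  exact (fd_smooth hf).clm_apply contDiff_const

lemma hasR {f : ℝ → ℝ → ℝ} (hf : ContDiff ℝ (⊤ : ℕ∞) (Function.uncurry f)) (R θ : ℝ) :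
    HasDerivAt (fun r => f r θ) (pdR f R θ) R :=
  (hdR hf R θ).differentiableAt.hasDerivAt

lemma hasT {f : ℝ → ℝ → ℝ} (hf : ContDiff ℝ (⊤ : ℕ∞) (Function.uncurry f)) (R θ : ℝ) :
    HasDerivAt (fun t => f R t) (pdT f R θ) θ :=
  (hdT hf R θ).differentiableAt.hasDerivAt

lemma mixed {f : ℝ → ℝ → ℝ} (hf : ContDiff ℝ (⊤ : ℕ∞) (Function.uncurry f)) (R θ : ℝ) :
    pdR (pdT f) R θ = pdT (pdR f) R θ := by
  have hs : IsSymmSndFDerivAt ℝ (Function.uncurry f) (R, θ) :=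
    hf.contDiffAt.isSymmSndFDerivAt (by simpa using (mod_cast le_top : ((2 : ℕ∞) : WithTop ℕ∞) ≤ ((⊤ : ℕ∞) : WithTop ℕ∞)))
  have hd : DifferentiableAt ℝ (fderiv ℝ (Function.uncurry f)) (R, θ) :=
    (fd_smooth hf).differentiable (by simp) _
  have h1 : pdR (pdT f) R θ
      = fderiv ℝ (fderiv ℝ (Function.uncurry f)) (R, θ) (1, 0) (0, 1) := by
    have := (hdR (pdT_smooth hf) R θ).deriv
    rw [pdT_eq hf, fderiv_clm_apply hd (differentiableAt_const _)] at this
    simpa [pdR] using this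
  have h2 : pdT (pdR f) R θ
      = fderiv ℝ (fderiv ℝ (Function.uncurry f)) (R, θ) (0, 1) (1, 0) := by
    have := (hdT (pdR_smooth hf) R θ).deriv
    rw [pdR_eq hf, fderiv_clm_apply hd (differentiableAt_const _)] at this
    simpa [pdT] using this
  rw [h1, h2]
  exact hs _ _

theorem stmt3
    (R₀ : ℝ) (hR₀ : 0 < R₀)
    (U A : ℝ → ℝ → ℝ)
    (hU : ContDiff ℝ (⊤ : ℕ∞) (Function.uncurry U))
    (hA : ContDiff ℝ (⊤ : ℕ∞) (Function.uncurry A))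
    (hUper : ∀ R θ, U R (θ + 2 * π) = U R θ)
    (hAper : ∀ R θ, A R (θ + 2 * π) = A R θ)
    (eqU : ∀ R, R₀ ≤ R → ∀ θ : ℝ,
      deriv (fun r => r * pdR U r θ) R - deriv (fun t => R * pdT U R t) θ
        = exp (4 * U R θ) / (2 * R) * ((pdR A R θ) ^ 2 - (pdT A R θ) ^ 2))
    (eqA : ∀ R, R₀ ≤ R → ∀ θ : ℝ,
      deriv (fun r => r⁻¹ * pdR A r θ) R - deriv (fun t => R⁻¹ * pdT A R t) θ
        = 4 / R * (-(pdR U R θ * pdR A R θ) + pdT U R θ * pdT A R θ))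
    (A' : ℝ → ℝ → ℝ)
    (hA' : ContDiff ℝ (⊤ : ℕ∞) (Function.uncurry A'))
    (hA'R : ∀ R, R₀ ≤ R → ∀ θ : ℝ, pdR A' R θ = exp (4 * U R θ) / R * pdT A R θ)
    (hA'T : ∀ R, R₀ ≤ R → ∀ θ : ℝ, pdT A' R θ = exp (4 * U R θ) / R * pdR A R θ)
    (U' : ℝ → ℝ → ℝ)
    (hU' : ∀ R θ, U' R θ = 2⁻¹ * Real.log R - U R θ) :
    ∀ R, R₀ ≤ R → ∀ θ : ℝ,
      (deriv (fun r => r * pdR U' r θ) R - deriv (fun t => R * pdT U' R t) θ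
        = exp (4 * U' R θ) / (2 * R) * ((pdR A' R θ) ^ 2 - (pdT A' R θ) ^ 2))
      ∧ (deriv (fun r => r⁻¹ * pdR A' r θ) R - deriv (fun t => R⁻¹ * pdT A' R t) θ
        = 4 / R * (-(pdR U' R θ * pdR A' R θ) + pdT U' R θ * pdT A' R θ)) := by
  intro R hR θ
  have hRpos : 0 < R := lt_of_lt_of_le hR₀ hR
  have hRne : R ≠ 0 := hRpos.ne'
  have hUR : ∀ r, 0 < r → ∀ t, pdR U' r t = 2⁻¹ * r⁻¹ - pdR U r t := by
    intro r hr t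
    have : HasDerivAt (fun r => 2⁻¹ * Real.log r - U r t) (2⁻¹ * r⁻¹ - pdR U r t) r :=
      ((Real.hasDerivAt_log hr.ne').const_mul _).sub (hasR hU r t)
    simp only [pdR, hU']
    exact this.deriv
  have hUT : ∀ r t, pdT U' r t = - pdT U r t := by
    intro r t
    have : HasDerivAt (fun t => 2⁻¹ * Real.log r - U r t) (- pdT U r t) t :=
      (hasT hU r t).const_sub _
    simp only [pdT, hU']
    exact this.deriv
  have hexp : exp (4 * U' R θ) = R ^ 2 * (exp (4 * U R θ))⁻¹ := by
    rw [hU', ← Real.exp_neg,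
      show 4 * (2⁻¹ * Real.log R - U R θ) = Real.log R + Real.log R + -(4 * U R θ) by ring,
      Real.exp_add, Real.exp_add, Real.exp_log hRpos]
    ring
  have hE : exp (4 * U R θ) ≠ 0 := (Real.exp_pos _).ne'
  constructor
  · have e1 : deriv (fun r => r * pdR U' r θ) R = - deriv (fun r => r * pdR U r θ) R := by
      have hev : (fun r => r * pdR U' r θ) =ᶠ[nhds R] fun r => 2⁻¹ - r * pdR U r θ := by
        filter_upwards [lt_mem_nhds hRpos] with r hr
        rw [hUR r hr]
        have := hr.ne'
        field_simp
      rw [hev.deriv_eq, deriv_const_sub]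
    have e2 : deriv (fun t => R * pdT U' R t) θ = - deriv (fun t => R * pdT U R t) θ := by
      simp only [hUT, mul_neg]
      exact deriv.fun_neg
    have e := eqU R hR θ
    have e3 : deriv (fun r => r * pdR U' r θ) R - deriv (fun t => R * pdT U' R t) θ
        = - (exp (4 * U R θ) / (2 * R) * ((pdR A R θ) ^ 2 - (pdT A R θ) ^ 2)) := by
      rw [e1, e2, ← e]; ring
    rw [e3, hexp, hA'R R hR, hA'T R hR]
    field_simp
    ring
  · have hexpR : HasDerivAt (fun r => exp (4 * U r θ)) (exp (4 * U R θ) * (4 * pdR U R θ)) R :=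
      ((hasR hU R θ).const_mul 4).exp
    have hexpT : HasDerivAt (fun t => exp (4 * U R t)) (exp (4 * U R θ) * (4 * pdT U R θ)) θ :=
      ((hasT hU R θ).const_mul 4).exp
    have e1 : deriv (fun r => r⁻¹ * pdR A' r θ) R
        = R⁻¹ ^ 2 * exp (4 * U R θ) * (4 * pdR U R θ * pdT A R θ - 2 * R⁻¹ * pdT A R θ
          + pdT (pdR A) R θ) := by
      have hd1 := (hasDerivAt_inv hRne).mul (hasR (pdR_smooth hA') R θ)
      have hd2 := (((hasDerivAt_inv hRne).mul (hasDerivAt_inv hRne)).mul hexpR).mul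
        (hasR (pdT_smooth hA) R θ)
      have hd3 : HasDerivWithinAt (fun r => r⁻¹ * pdR A' r θ) _ (Ici R) R :=
        hd2.hasDerivWithinAt.congr_of_mem (fun r hr => by
          simp only [Pi.mul_apply]
          rw [hA'R r (le_trans hR hr)]
          ring) self_mem_Ici
      have hu := (uniqueDiffWithinAt_Ici R).eq_deriv _ hd1.hasDerivWithinAt hd3
      refine (hd1.deriv.trans hu).trans ?_
      rw [mixed hA]
      simp only [Pi.mul_apply, Pi.inv_apply]
      field_simp
      ring
    have e2 : deriv (fun t => R⁻¹ * pdT A' R t) θ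
        = R⁻¹ ^ 2 * exp (4 * U R θ) * (4 * pdT U R θ * pdR A R θ + pdT (pdR A) R θ) := by
      have hd2 := (hexpT.mul (hasT (pdR_smooth hA) R θ)).const_mul (R⁻¹ ^ 2)
      have he : (fun t => R⁻¹ * pdT A' R t)
          = fun t => R⁻¹ ^ 2 * (exp (4 * U R t) * pdR A R t) := by
        funext t
        rw [hA'T R hR]
        ring
      rw [he]
      refine hd2.deriv.trans ?_
      ring
    rw [e1, e2, hA'R R hR, hA'T R hR, hUR R hRpos, hUT]
    field_simp
    ring
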